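/- Let μ > 0 and ω ≠ 0. Define D(r) = sin(μ·r)/μ and H(r) = (2ω/μ²)·(1 - cos(μ·r)), and set f(r) = D(r)² - H(r)². Then for every R₀ ∈ ℝ there exist r₁ > R₀ and r₂ > R₀ such that f(r₁) > 0 and f(r₂) < 0. (For m² = -μ² < 0 the homogeneous Gödel-type spacetime exhibits an infinite sequence of alternating causal and non-causal regions.) -/

import Mathlib

/-!
Since `sin² = (1 - cos)(1 + cos)`, the component `g_φφ = D² - H²` is a quadratic polynomial in
`c = cos (μ r)`, namely a positive multiple of `(1 - c) (c - c₀)` with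
`c₀ = (4ω² - μ²) / (4ω² + μ²)`. As `-1 < c₀ < 1`, and `cos (μ r)` takes each value in `[-1, 1]` at
arbitrarily large radii, both signs recur forever.
-/

open Real

/-- The function `D` of the Gödel-type line element with `m² = -μ²`. -/
noncomputable def godelD (μ r : ℝ) : ℝ := sin (μ * r) / μ

/-- The function `H` of the Gödel-type line element with `m² = -μ²` and rotation `ω`. -/
noncomputable def godelH (μ ω r : ℝ) : ℝ := 2 * ω / μ ^ 2 * (1 - cos (μ * r))

/-- The metric component `g_φφ`; the circle of radius `r` is a closed timelike curve when it is
negative. -/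
noncomputable def godelGPhiPhi (μ ω r : ℝ) : ℝ := godelD μ r ^ 2 - godelH μ ω r ^ 2

/-- The value of `cos (μ r)` at the critical radii, where causal and non-causal regions meet;
for `ω ≠ 0` this amounts to `tan² (μ r / 2) = μ² / (4ω²)`. -/
noncomputable def godelCriticalCos (μ ω : ℝ) : ℝ :=
  (4 * ω ^ 2 - μ ^ 2) / (4 * ω ^ 2 + μ ^ 2)

section

variable {μ ω : ℝ}

lemma neg_one_lt_godelCriticalCos (hω : ω ≠ 0) : -1 < godelCriticalCos μ ω := by
  rw [godelCriticalCos, lt_div_iff₀ (by positivity)]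
  linarith [sq_pos_of_ne_zero hω]

lemma godelCriticalCos_lt_one (hμ : μ ≠ 0) : godelCriticalCos μ ω < 1 := by
  rw [godelCriticalCos, div_lt_one (by positivity)]
  linarith [sq_pos_of_ne_zero hμ]

lemma godelGPhiPhi_eq_mul (hμ : μ ≠ 0) (r : ℝ) :
    godelGPhiPhi μ ω r = (4 * ω ^ 2 + μ ^ 2) / μ ^ 4 * (1 - cos (μ * r)) *
      (cos (μ * r) - godelCriticalCos μ ω) := by
  rw [godelGPhiPhi, godelD, godelH, godelCriticalCos, div_pow, sin_sq]
  field_simp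
  ring

lemma godelGPhiPhi_pos_iff (hμ : μ ≠ 0) {r : ℝ} :
    0 < godelGPhiPhi μ ω r ↔ godelCriticalCos μ ω < cos (μ * r) ∧ cos (μ * r) < 1 := by
  have hcoeff : 0 < (4 * ω ^ 2 + μ ^ 2) / μ ^ 4 := by positivity
  have hcos : 0 ≤ 1 - cos (μ * r) := sub_nonneg.2 (cos_le_one _)
  rw [godelGPhiPhi_eq_mul hμ]
  constructor
  · intro h
    have hdiff : 0 < cos (μ * r) - godelCriticalCos μ ω :=
      pos_of_mul_pos_right h (mul_nonneg hcoeff.le hcos)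
    have hfactor : 0 < 1 - cos (μ * r) :=
      pos_of_mul_pos_right (pos_of_mul_pos_left h hdiff.le) hcoeff.le
    exact ⟨sub_pos.1 hdiff, sub_pos.1 hfactor⟩
  · rintro ⟨hcrit, hlt⟩
    exact mul_pos (mul_pos hcoeff (sub_pos.2 hlt)) (sub_pos.2 hcrit)

lemma godelGPhiPhi_neg_iff (hμ : μ ≠ 0) {r : ℝ} :
    godelGPhiPhi μ ω r < 0 ↔ cos (μ * r) < godelCriticalCos μ ω := by
  have hcoeff : 0 < (4 * ω ^ 2 + μ ^ 2) / μ ^ 4 := by positivity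
  have hcos : 0 ≤ 1 - cos (μ * r) := sub_nonneg.2 (cos_le_one _)
  rw [godelGPhiPhi_eq_mul hμ]
  constructor
  · intro h
    exact sub_neg.1 (neg_of_mul_neg_right h (mul_nonneg hcoeff.le hcos))
  · intro hcrit
    have hlt : cos (μ * r) < 1 := hcrit.trans (godelCriticalCos_lt_one hμ)
    exact mul_neg_of_pos_of_neg (mul_pos hcoeff (sub_pos.2 hlt)) (sub_neg.2 hcrit)

lemma exists_gt_cos_mul_eq (hμ : 0 < μ) {c : ℝ} (hc : c ∈ Set.Icc (-1) 1) (R : ℝ) :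
    ∃ r, R < r ∧ cos (μ * r) = c := by
  obtain ⟨x, hx, hcos⟩ := cos_periodic.exists_mem_Ioc two_pi_pos (arccos c) (μ * R)
  refine ⟨x / μ, (lt_div_iff₀' hμ).2 hx.1, ?_⟩
  rw [mul_div_cancel₀ x hμ.ne', ← hcos, cos_arccos hc.1 hc.2]

end

/-- For `m² = -μ² < 0` the homogeneous Gödel-type spacetime exhibits an infinite
sequence of alternating causal and non-causal regions. -/
theorem godel_type_alternating_causal_regions
    (μ ω : ℝ) (hμ : 0 < μ) (hω : ω ≠ 0)
    (f : ℝ → ℝ)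
    (hf : ∀ r : ℝ, f r = (Real.sin (μ * r) / μ) ^ 2
      - ((2 * ω / μ ^ 2) * (1 - Real.cos (μ * r))) ^ 2) :
    ∀ R₀ : ℝ, (∃ r₁ : ℝ, R₀ < r₁ ∧ 0 < f r₁) ∧
      (∃ r₂ : ℝ, R₀ < r₂ ∧ f r₂ < 0) := by
  obtain rfl : f = godelGPhiPhi μ ω := funext hf
  intro R₀
  have hcrit : -1 < godelCriticalCos μ ω := neg_one_lt_godelCriticalCos hω
  constructor
  · obtain ⟨c, hcrit_lt, hc_lt⟩ := exists_between (godelCriticalCos_lt_one (ω := ω) hμ.ne')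
    obtain ⟨r, hr, rfl⟩ := exists_gt_cos_mul_eq hμ ⟨(hcrit.trans hcrit_lt).le, hc_lt.le⟩ R₀
    exact ⟨r, hr, (godelGPhiPhi_pos_iff hμ.ne').2 ⟨hcrit_lt, hc_lt⟩⟩
  · obtain ⟨r, hr, hcos⟩ := exists_gt_cos_mul_eq hμ (c := -1) (by norm_num) R₀
    exact ⟨r, hr, (godelGPhiPhi_neg_iff hμ.ne').2 (hcos ▸ hcrit)⟩
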